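/- (Soundness of the pruning criterion in IxG*.) Let (V, E, w) be a finite weighted directed graph with nonnegative weights, let s, t, v be vertices, let ε ≥ 1 and u be real numbers, and let l be a real number with 0 ≤ l and l ≤ the cost of every walk from v to t. Let W be a walk from s to t that passes through v, split at an occurrence of v into a prefix of cost c and a suffix from v to t. If c + ε·l > ε·u, then the cost of W is strictly greater than u. -/

import Mathlib

/-- A walk from `s` to `t` in the directed graph with adjacency `E`:
a nonempty list of vertices starting at `s`, ending at `t`, with
consecutive vertices adjacent. -/
def IsWalk {V : Type*} (E : V → V → Prop) (s t : V) (l : List V) : Prop :=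
  l ≠ [] ∧ l.head? = some s ∧ l.getLast? = some t ∧ l.Chain' E

/-- Cost of a walk: the sum of the weights of its consecutive pairs. -/
def walkCost {V : Type*} (w : V → V → ℝ) (l : List V) : ℝ :=
  ((l.zip l.tail).map fun p => w p.1 p.2).sum

theorem lt_add_of_mul_lt_add_mul {R : Type*} [Semiring R] [LinearOrder R] [IsOrderedRing R]
    {ε u c b : R} (hε : 1 ≤ ε) (hc : 0 ≤ c) (h : ε * u < c + ε * b) : u < c + b := by
  by_contra! hle
  refine h.not_ge ?_
  calc
    c + ε * b ≤ ε * c + ε * b := by gcongr; exact le_mul_of_one_le_left hc hε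
    _ = ε * (c + b) := (mul_add ε c b).symm
    _ ≤ ε * u := mul_le_mul_of_nonneg_left hle (zero_le_one.trans hε)

section Walk

variable {V : Type*} {E : V → V → Prop} {w : V → V → ℝ} {s t v : V} {l₁ l₂ : List V}

theorem IsWalk.of_append_cons_left (h : IsWalk E s t (l₁ ++ v :: l₂)) :
    IsWalk E s v (l₁ ++ [v]) := by
  obtain ⟨-, hhead, -, hchain⟩ := h
  exact ⟨by simp, by simpa using hhead, by simp, (List.isChain_split.mp hchain).1⟩

theorem IsWalk.of_append_cons_right (h : IsWalk E s t (l₁ ++ v :: l₂)) :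
    IsWalk E v t (v :: l₂) := by
  obtain ⟨-, -, hlast, hchain⟩ := h
  exact ⟨by simp, by simp, by simpa using hlast, (List.isChain_split.mp hchain).2⟩

@[simp]
theorem walkCost_singleton (w : V → V → ℝ) (a : V) : walkCost w [a] = 0 := by
  simp [walkCost]

@[simp]
theorem walkCost_cons_cons (w : V → V → ℝ) (a b : V) (l : List V) :
    walkCost w (a :: b :: l) = w a b + walkCost w (b :: l) := by
  simp [walkCost]

theorem walkCost_append_cons (w : V → V → ℝ) (v : V) (l₂ : List V) : ∀ l₁ : List V,
    walkCost w (l₁ ++ v :: l₂) = walkCost w (l₁ ++ [v]) + walkCost w (v :: l₂)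
  | [] => by simp
  | [a] => by simp
  | a :: b :: l => by
    simpa [add_assoc] using walkCost_append_cons w v l₂ (b :: l)

theorem walkCost_nonneg (hw : ∀ a b, E a b → 0 ≤ w a b) :
    ∀ {l : List V}, l.IsChain E → 0 ≤ walkCost w l
  | [], _ => by simp [walkCost]
  | [a], _ => by simp
  | a :: b :: l, h => by
    obtain ⟨hab, hl⟩ := List.isChain_cons_cons.mp h
    rw [walkCost_cons_cons]
    exact add_nonneg (hw a b hab) (walkCost_nonneg hw hl)

theorem ixg_star_prune_sound_general (hw : ∀ a b, E a b → 0 ≤ w a b) {ε u lb : ℝ} (hε : 1 ≤ ε)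
    (hlb : ∀ l, IsWalk E v t l → lb ≤ walkCost w l) (hWalk : IsWalk E s t (l₁ ++ v :: l₂))
    (hprune : ε * u < walkCost w (l₁ ++ [v]) + ε * lb) :
    u < walkCost w (l₁ ++ v :: l₂) := by
  have prefix_nonneg : 0 ≤ walkCost w (l₁ ++ [v]) :=
    walkCost_nonneg hw hWalk.of_append_cons_left.2.2.2
  have lb_le_suffix : lb ≤ walkCost w (v :: l₂) := hlb _ hWalk.of_append_cons_right
  calc
    u < walkCost w (l₁ ++ [v]) + lb := lt_add_of_mul_lt_add_mul hε prefix_nonneg hprune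
    _ ≤ walkCost w (l₁ ++ [v]) + walkCost w (v :: l₂) := by gcongr
    _ = walkCost w (l₁ ++ v :: l₂) := (walkCost_append_cons w v l₂ l₁).symm

end Walk

/-- Soundness of the pruning criterion in IxG*. -/
theorem ixg_star_prune_sound
    {V : Type*} [Fintype V] (E : V → V → Prop) (w : V → V → ℝ)
    (hw : ∀ a b, E a b → 0 ≤ w a b) (s t v : V)
    (ε u lb : ℝ) (hε : 1 ≤ ε) (hlb0 : 0 ≤ lb)
    (hlb : ∀ l, IsWalk E v t l → lb ≤ walkCost w l)
    (l₁ l₂ : List V) (hWalk : IsWalk E s t (l₁ ++ v :: l₂))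
    (c : ℝ) (hc : c = walkCost w (l₁ ++ [v]))
    (hprune : c + ε * lb > ε * u) :
    walkCost w (l₁ ++ v :: l₂) > u :=
  ixg_star_prune_sound_general hw hε hlb hWalk (hc ▸ hprune)
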